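/- Let P₁, ..., P_N be orthogonal projections on a finite-dimensional Hilbert space, let G be a graph on {1,...,N} with maximum degree z, such that P_v P_w ≥ 0 (positive semidefinite product, e.g. commuting with nonnegative product) whenever (v,w) is not an edge, and suppose P_v P_w + P_w P_v ≥ -η(P_v + P_w) for every edge (v,w). Then (Σ_v P_v)² ≥ (1 - zη) Σ_v P_v. In particular, if zη < 1, every nonzero eigenvalue of Σ_v P_v is at least 1 - zη. -/

import Mathlib

/-!
Write `S = ∑ v, P v`. Expanding the square symmetrically, `2 S²` is the sum over ordered pairs
`(v, w)` of the anticommutators `P v * P w + P w * P v`. The diagonal terms are `2 P v`, the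
off-diagonal non-edge terms are nonnegative, and each edge term is at least `-η (P v + P w)`.
Every vertex `v` lies in `deg v` edges, so the edges cost at most `2 η ∑ deg v • P v ≤ 2 z η S`
(`pair_sum_eq`), which gives `S² ≥ (1 - z η) S`. The spectral bound follows by testing this
inequality and `S ≥ 0` on an eigenvector: `μ² ≥ (1 - z η) μ` with `μ > 0`.
-/

/-- Counting identity behind the square expansion: after removing the diagonal and adding
`η (P v + P w)` on every edge, the anticommutators sum to `2 S² - 2 S + 2 η ∑ deg v • P v`. -/
theorem pair_sum_eq {A : Type*} [Ring A] [Algebra ℝ A] {ι : Type*} [Fintype ι] [DecidableEq ι]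
    (P : ι → A) (G : SimpleGraph ι) [DecidableRel G.Adj] (η : ℝ) :
    ∑ v, ∑ w, (P v * P w + P w * P v - (if v = w then (2 : ℝ) • P v else 0)
        + (if G.Adj v w then η • (P v + P w) else 0))
      = (2 : ℝ) • (∑ v, P v) ^ 2 - (2 : ℝ) • ∑ v, P v
        + ∑ v, (2 * η * (G.degree v : ℝ)) • P v := by
  have hsq : ∑ v, ∑ w, P v * P w = (∑ v, P v) ^ 2 := by
    rw [sq, Finset.sum_mul_sum]
  have hsq' : ∑ v, ∑ w, P w * P v = (∑ v, P v) ^ 2 := by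
    rw [Finset.sum_comm, hsq]
  have hrow : ∀ v, ∑ w, (if G.Adj v w then η • P v else 0) = (η * (G.degree v : ℝ)) • P v := by
    intro v
    rw [← Finset.sum_filter, ← SimpleGraph.neighborFinset_eq_filter, Finset.sum_const,
      SimpleGraph.card_neighborFinset_eq_degree, ← Nat.cast_smul_eq_nsmul ℝ, smul_smul, mul_comm]
  have hcol : ∑ v, ∑ w, (if G.Adj v w then η • P w else 0)
      = ∑ v, (η * (G.degree v : ℝ)) • P v := by
    rw [Finset.sum_comm]
    refine Finset.sum_congr rfl fun v _ => ?_
    simp only [G.adj_comm _ v, hrow]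
  have hedge : ∑ v, ∑ w, (if G.Adj v w then η • (P v + P w) else 0)
      = ∑ v, (2 * η * (G.degree v : ℝ)) • P v := by
    have hsplit : ∀ v w, (if G.Adj v w then η • (P v + P w) else 0)
        = (if G.Adj v w then η • P v else 0) + (if G.Adj v w then η • P w else 0) := by
      intro v w
      split_ifs <;> simp
    simp only [hsplit, Finset.sum_add_distrib, hcol, hrow]
    rw [← Finset.sum_add_distrib]
    refine Finset.sum_congr rfl fun v _ => ?_
    rw [← add_smul]
    ring_nf
  simp only [Finset.sum_add_distrib, Finset.sum_sub_distrib, hsq, hsq', hedge,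
    Finset.sum_ite_eq, Finset.mem_univ, if_true, ← Finset.smul_sum]
  rw [two_smul ℝ ((∑ v, P v) ^ 2)]

/-- A real eigenvalue of an operator `S ≥ 0` with `S² ≥ c S` is either zero or at least `c`. -/
theorem le_eigenvalue_of_sq_sub_smul_isPositive {H : Type*} [NormedAddCommGroup H]
    [InnerProductSpace ℂ H] (S : H →L[ℂ] H) (c : ℝ) (hS : S.IsPositive)
    (hT : (S ^ 2 - c • S).IsPositive) (μ : ℝ)
    (hμ : Module.End.HasEigenvalue S.toLinearMap (μ : ℂ)) (hμ0 : μ ≠ 0) : c ≤ μ := by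
  obtain ⟨x, hx⟩ := hμ.exists_hasEigenvector
  have hx0 : 0 < ‖x‖ ^ 2 := by
    have := norm_pos_iff.mpr hx.2
    positivity
  have hSx : S x = (μ : ℂ) • x := hx.apply_eq_smul
  have hTx : (S ^ 2 - c • S) x = ((μ ^ 2 - c * μ : ℝ) : ℂ) • x := by
    have h2 : (S ^ 2) x = S (S x) := by rw [sq]; rfl
    rw [sub_apply, h2, smul_apply, hSx, map_smul, hSx, smul_smul, ← Complex.coe_smul, smul_smul,
      ← sub_smul]
    push_cast
    ring_nf
  -- The quadratic form of an operator acting on `x` as a real scalar `a` is `a ‖x‖²`.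
  have key : ∀ (B : H →L[ℂ] H) (a : ℝ), B.IsPositive → B x = (a : ℂ) • x → 0 ≤ a := by
    intro B a hB hBx
    have h := hB.re_inner_nonneg_left x
    rw [hBx, inner_smul_left, inner_self_eq_norm_sq_to_K, Complex.conj_ofReal] at h
    have h' : 0 ≤ a * ‖x‖ ^ 2 := by
      have e : RCLike.re ((a : ℂ) * ((‖x‖ : ℂ)) ^ 2) = a * ‖x‖ ^ 2 := by
        rw [← Complex.ofReal_pow, ← Complex.ofReal_mul]; rfl
      exact e ▸ h
    exact nonneg_of_mul_nonneg_left h' hx0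
  have h1 : 0 < μ := lt_of_le_of_ne (key S μ hS hSx) hμ0.symm
  have h2 := key _ _ hT hTx
  nlinarith

/-- If `P_v` are orthogonal projections and `G` a graph of maximum degree `z` such
that `P_v P_w ≥ 0` for distinct non-adjacent `v, w`, and
`P_v P_w + P_w P_v ≥ -η (P_v + P_w)` for adjacent `v, w`, then
`(Σ P_v)² ≥ (1 - zη) Σ P_v`; in particular if `zη < 1` then every nonzero
eigenvalue of `Σ P_v` is at least `1 - zη`. -/
theorem aklt_stmt_9 {H : Type*} [NormedAddCommGroup H] [InnerProductSpace ℂ H]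
    [FiniteDimensional ℂ H] (N : ℕ) (Ps : Fin N → (H →L[ℂ] H))
    (hP₁ : ∀ v, IsIdempotentElem (Ps v)) (hP₂ : ∀ v, IsSelfAdjoint (Ps v))
    (G : SimpleGraph (Fin N)) [DecidableRel G.Adj] (z : ℕ)
    (hdeg : ∀ v, G.degree v ≤ z)
    (η : ℝ) (hη : 0 ≤ η)
    (hnonadj : ∀ v w, v ≠ w → ¬ G.Adj v w → (Ps v * Ps w).IsPositive)
    (hadj : ∀ v w, G.Adj v w →
      (Ps v * Ps w + Ps w * Ps v + η • (Ps v + Ps w)).IsPositive) :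
    ((∑ v, Ps v) ^ 2 - (1 - (z : ℝ) * η) • ∑ v, Ps v).IsPositive ∧
    ((z : ℝ) * η < 1 → ∀ μ : ℝ,
      Module.End.HasEigenvalue ((∑ v, Ps v).toLinearMap) (μ : ℂ) → μ ≠ 0 →
      1 - (z : ℝ) * η ≤ μ) := by
  have hP : ∀ v, 0 ≤ Ps v := fun v => IsStarProjection.nonneg ⟨hP₁ v, hP₂ v⟩
  have hsmul : ∀ (a : ℝ) (B : H →L[ℂ] H), 0 ≤ a → 0 ≤ B → 0 ≤ a • B :=
    fun a B ha hB => smul_nonneg ha hB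
  have hS : 0 ≤ ∑ v, Ps v := Finset.sum_nonneg fun v _ => hP v
  have hpair : ∀ v w, 0 ≤ Ps v * Ps w + Ps w * Ps v - (if v = w then (2 : ℝ) • Ps v else 0)
      + (if G.Adj v w then η • (Ps v + Ps w) else 0) := by
    intro v w
    rcases eq_or_ne v w with rfl | hvw
    · simp [(hP₁ v).eq, two_smul]
    · by_cases h : G.Adj v w
      · simpa [hvw, h] using
          (ContinuousLinearMap.nonneg_iff_isPositive _).mpr (hadj v w h)
      · simpa [hvw, h] using
          (ContinuousLinearMap.nonneg_iff_isPositive _).mpr ((hnonadj v w hvw h).add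
            (hnonadj w v hvw.symm fun h' => h h'.symm))
  have hsum := Finset.sum_nonneg fun v (_ : v ∈ Finset.univ) =>
    Finset.sum_nonneg fun w (_ : w ∈ Finset.univ) => hpair v w
  rw [pair_sum_eq] at hsum
  have hslack : 0 ≤ ∑ v, (2 * η * ((z : ℝ) - G.degree v)) • Ps v := by
    refine Finset.sum_nonneg fun v _ => hsmul _ _ ?_ (hP v)
    have : (G.degree v : ℝ) ≤ z := by exact_mod_cast hdeg v
    have := sub_nonneg.mpr this
    positivity
  have hT : 0 ≤ (∑ v, Ps v) ^ 2 - (1 - (z : ℝ) * η) • ∑ v, Ps v := by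
    have h := hsmul (1 / 2) _ (by norm_num) (add_nonneg hsum hslack)
    have e : ∑ v, (2 * η * ((z : ℝ) - G.degree v)) • Ps v
        = (2 * η * z) • ∑ v, Ps v - ∑ v, (2 * η * (G.degree v : ℝ)) • Ps v := by
      rw [Finset.smul_sum, ← Finset.sum_sub_distrib]
      refine Finset.sum_congr rfl fun v _ => ?_
      rw [← sub_smul, mul_sub]
    rw [e] at h
    convert h using 1
    module
  rw [ContinuousLinearMap.nonneg_iff_isPositive] at hT hS
  exact ⟨hT, fun _ μ hμ hμ0 => le_eigenvalue_of_sq_sub_smul_isPositive _ _ hS hT μ hμ hμ0⟩
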